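/- If ρ is a separable density matrix on ℂ² ⊗ ℂ², then |c₁₁| + |c₂₂| + |c₃₃| ≤ 1 (the diagonal of the correlation matrix lies in the octahedron T ∩ −T). Conversely, for Bell-diagonal states this condition is also sufficient: a convex combination ρ of the four Bell-state projectors |φ⁺⟩⟨φ⁺|, |φ⁻⟩⟨φ⁻|, |ψ⁺⟩⟨ψ⁺|, |ψ⁻⟩⟨ψ⁻| is separable if and only if |c₁₁| + |c₂₂| + |c₃₃| ≤ 1. -/

import Mathlib

open scoped ComplexOrder Kronecker

noncomputable section

/-- The standard basis vector `|a⟩` of `ℂ²`. -/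
def e (a : Fin 2) : Fin 2 → ℂ := fun b => if b = a then 1 else 0

/-- Tensor product of two qubit vectors, `|ab⟩`-style indexing by pairs. -/
def t2 (x y : Fin 2 → ℂ) : Fin 2 × Fin 2 → ℂ := fun p => x p.1 * y p.2

/-- The outer product `|ψ⟩⟨ψ| = ψψ*`. -/
def outer {ι : Type*} (ψ : ι → ℂ) : Matrix ι ι ℂ :=
  Matrix.of fun i j => ψ i * (starRingEnd ℂ) (ψ j)

/-- The four Bell states `|φ⁺⟩, |φ⁻⟩, |ψ⁺⟩, |ψ⁻⟩`. -/
def bell : Fin 4 → (Fin 2 × Fin 2 → ℂ) :=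
  ![(Real.sqrt 2 : ℂ)⁻¹ • (t2 (e 0) (e 0) + t2 (e 1) (e 1)),
    (Real.sqrt 2 : ℂ)⁻¹ • (t2 (e 0) (e 0) - t2 (e 1) (e 1)),
    (Real.sqrt 2 : ℂ)⁻¹ • (t2 (e 0) (e 1) + t2 (e 1) (e 0)),
    (Real.sqrt 2 : ℂ)⁻¹ • (t2 (e 0) (e 1) - t2 (e 1) (e 0))]

/-- A density matrix: positive semidefinite with trace one. -/
def IsDensity {ι : Type*} [Fintype ι] (ρ : Matrix ι ι ℂ) : Prop :=
  ρ.PosSemidef ∧ ρ.trace = 1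

/-- A separable state: a finite convex combination of tensor products of density
matrices; a non-separable density matrix is entangled. -/
def Separable {m n : ℕ} (ρ : Matrix (Fin m × Fin n) (Fin m × Fin n) ℂ) : Prop :=
  ∃ (k : ℕ) (lam : Fin k → ℝ) (ρ1 : Fin k → Matrix (Fin m) (Fin m) ℂ)
    (ρ2 : Fin k → Matrix (Fin n) (Fin n) ℂ),
    (∀ i, 0 ≤ lam i) ∧ (∑ i, lam i = 1) ∧
    (∀ i, IsDensity (ρ1 i)) ∧ (∀ i, IsDensity (ρ2 i)) ∧
    ρ = ∑ i, (lam i : ℂ) • (ρ1 i ⊗ₖ ρ2 i)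

/-- The three Pauli matrices `σ₁, σ₂, σ₃`. -/
def pauli : Fin 3 → Matrix (Fin 2) (Fin 2) ℂ :=
  ![!![0, 1; 1, 0], !![0, -Complex.I; Complex.I, 0], !![1, 0; 0, -1]]

/-- The correlation-matrix entry `c_{ij} = Tr(ρ(σᵢ ⊗ σⱼ))`. -/
def cEl (ρ : Matrix (Fin 2 × Fin 2) (Fin 2 × Fin 2) ℂ) (i j : Fin 3) : ℝ :=
  ((ρ * (pauli i ⊗ₖ pauli j)).trace).re

/-- Rank-one projection onto an eigenspace of a Pauli matrix. -/
def blo (i : Fin 3) (s : ℝ) : Matrix (Fin 2) (Fin 2) ℂ :=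
  (1 / 2 : ℂ) • (1 + (s : ℂ) • pauli i)

lemma blo_density (i : Fin 3) (s : ℝ) (hs : s * s = 1) : IsDensity (blo i s) := by
  have hs' : (s : ℂ) * s = 1 := by exact_mod_cast hs
  have h2 : (starRingEnd ℂ) 2 = 2 := Complex.conj_ofNat 2
  constructor
  · have h : blo i s = (blo i s).conjTranspose * blo i s := by
      ext a b
      fin_cases i <;> fin_cases a <;> fin_cases b <;>
        simp [blo, pauli, Matrix.mul_apply, Fin.sum_univ_two, h2] <;>
        ring_nf <;> (try simp [pow_two, hs']) <;> (try ring_nf)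
    rw [h]
    exact Matrix.posSemidef_conjTranspose_mul_self _
  · fin_cases i <;> simp [blo, pauli, Matrix.trace, Fin.sum_univ_two] <;> ring

lemma half_density : IsDensity ((1 / 2 : ℂ) • (1 : Matrix (Fin 2) (Fin 2) ℂ)) := by
  constructor
  · refine Matrix.PosSemidef.one.smul ?_
    norm_num [Complex.le_def]
  · simp [Matrix.trace, Fin.sum_univ_two]

/-- Bloch coordinate. -/
def blr (A : Matrix (Fin 2) (Fin 2) ℂ) (i : Fin 3) : ℝ := ((A * pauli i).trace).re

lemma blr_sq (A : Matrix (Fin 2) (Fin 2) ℂ) (hA : IsDensity A) :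
    (blr A 0) ^ 2 + (blr A 1) ^ 2 + (blr A 2) ^ 2 ≤ 1 := by
  obtain ⟨h, ht⟩ := hA
  have hd := h.det_nonneg
  have h1 := h.1.apply 0 1
  have h00 := h.1.apply 0 0
  have h11 := h.1.apply 1 1
  rw [Matrix.det_fin_two] at hd
  simp [Matrix.trace, Fin.sum_univ_two, Complex.ext_iff, Complex.le_def] at *
  simp [blr, pauli, Matrix.trace, Fin.sum_univ_two, Matrix.mul_apply]
  obtain ⟨h1a, h1b⟩ := h1
  have e0 : (A 0 0).im = 0 := by linarith
  have e1 : (A 1 1).im = 0 := by linarith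
  rw [← h1a, ← h1b, e0, e1] at hd
  rw [← h1a, ← h1b]
  have e2 : (A 0 0).re = 1 - (A 1 1).re := by linarith
  rw [e2] at hd ⊢
  nlinarith [hd.1]

lemma trace_im (A : Matrix (Fin 2) (Fin 2) ℂ) (hA : IsDensity A) (i : Fin 3) :
    ((A * pauli i).trace).im = 0 := by
  obtain ⟨h, ht⟩ := hA
  have h1 := h.1.apply 0 1
  have h00 := h.1.apply 0 0
  have h11 := h.1.apply 1 1
  simp [Complex.ext_iff] at h1 h00 h11
  fin_cases i <;> simp [pauli, Matrix.trace, Fin.sum_univ_two, Matrix.mul_apply] <;> linarith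

lemma cEl_kron (A B : Matrix (Fin 2) (Fin 2) ℂ) (hA : IsDensity A) (i : Fin 3) :
    cEl (A ⊗ₖ B) i i = blr A i * blr B i := by
  unfold cEl
  rw [← Matrix.mul_kronecker_mul, Matrix.trace_kronecker, Complex.mul_re, trace_im A hA]
  simp [blr]

lemma cEl_sum {k : ℕ} (lam : Fin k → ℝ) (R : Fin k → Matrix (Fin 2 × Fin 2) (Fin 2 × Fin 2) ℂ)
    (i : Fin 3) : cEl (∑ j, (lam j : ℂ) • R j) i i = ∑ j, lam j * cEl (R j) i i := by
  simp [cEl, Matrix.sum_mul, Matrix.trace_sum]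

lemma abs_le_aux (x y z a b c : ℝ) (h : x ^ 2 + y ^ 2 + z ^ 2 ≤ 1) (h' : a ^ 2 + b ^ 2 + c ^ 2 ≤ 1) :
    |x * a| + |y * b| + |z * c| ≤ 1 := by
  rw [abs_mul, abs_mul, abs_mul]
  rw [← sq_abs x, ← sq_abs y, ← sq_abs z] at h
  rw [← sq_abs a, ← sq_abs b, ← sq_abs c] at h'
  nlinarith [sq_nonneg (|x| - |a|), sq_nonneg (|y| - |b|), sq_nonneg (|z| - |c|)]

lemma sep_le (ρ : Matrix (Fin 2 × Fin 2) (Fin 2 × Fin 2) ℂ) (h : Separable ρ) :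
    |cEl ρ 0 0| + |cEl ρ 1 1| + |cEl ρ 2 2| ≤ 1 := by
  obtain ⟨k, lam, A, B, hl, hs, hA, hB, rfl⟩ := h
  have key : ∀ i, |cEl (∑ j, (lam j : ℂ) • (A j ⊗ₖ B j)) i i|
      ≤ ∑ j, lam j * |blr (A j) i * blr (B j) i| := by
    intro i
    rw [cEl_sum]
    refine (Finset.abs_sum_le_sum_abs _ _).trans (le_of_eq (Finset.sum_congr rfl fun j _ => ?_))
    rw [cEl_kron _ _ (hA j), abs_mul, abs_of_nonneg (hl j)]
  refine (add_le_add (add_le_add (key 0) (key 1)) (key 2)).trans ?_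
  rw [← Finset.sum_add_distrib, ← Finset.sum_add_distrib, ← hs]
  refine Finset.sum_le_sum fun j _ => ?_
  rw [← mul_add, ← mul_add]
  exact mul_le_of_le_one_right (hl j) (abs_le_aux _ _ _ _ _ _ (blr_sq _ (hA j)) (blr_sq _ (hB j)))

lemma exists_sgn (c : ℝ) : ∃ s : ℝ, s * s = 1 ∧ |c| * s = c := by
  rcases le_total 0 c with h | h
  · exact ⟨1, by norm_num, by rw [abs_of_nonneg h]; ring⟩
  · exact ⟨-1, by norm_num, by rw [abs_of_nonpos h]; ring⟩

/-- Matrix with given correlation diagonal and maximally mixed marginals. -/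
def corr (a b c : ℝ) : Matrix (Fin 2 × Fin 2) (Fin 2 × Fin 2) ℂ :=
  (1 / 4 : ℂ) • (1 + (a : ℂ) • (pauli 0 ⊗ₖ pauli 0) + (b : ℂ) • (pauli 1 ⊗ₖ pauli 1)
    + (c : ℂ) • (pauli 2 ⊗ₖ pauli 2))

lemma pair_eq (i : Fin 3) (c s : ℝ) (h : |c| * s = c) :
    ((|c| / 2 : ℝ) : ℂ) • (blo i 1 ⊗ₖ blo i s) + ((|c| / 2 : ℝ) : ℂ) • (blo i (-1) ⊗ₖ blo i (-s))
      = (1 / 4 : ℂ) • (((|c| : ℝ) : ℂ) • 1 + (c : ℂ) • (pauli i ⊗ₖ pauli i)) := by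
  have h' : (c : ℂ) = (|c| : ℝ) * s := by exact_mod_cast h.symm
  generalize hx : |c| = x at *
  rw [h', ← Matrix.one_kronecker_one]
  ext ⟨p, q⟩ ⟨p', q'⟩
  simp only [blo, Matrix.add_apply, Matrix.smul_apply, Matrix.kronecker_apply, smul_eq_mul]
  push_cast
  ring

lemma corr_sep (a b c : ℝ) (h : |a| + |b| + |c| ≤ 1) : Separable (corr a b c) := by
  obtain ⟨s, hs, hs'⟩ := exists_sgn a
  obtain ⟨t, ht, ht'⟩ := exists_sgn b
  obtain ⟨u, hu, hu'⟩ := exists_sgn c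
  refine ⟨7, ![|a| / 2, |a| / 2, |b| / 2, |b| / 2, |c| / 2, |c| / 2, 1 - (|a| + |b| + |c|)],
    ![blo 0 1, blo 0 (-1), blo 1 1, blo 1 (-1), blo 2 1, blo 2 (-1), (1 / 2 : ℂ) • 1],
    ![blo 0 s, blo 0 (-s), blo 1 t, blo 1 (-t), blo 2 u, blo 2 (-u), (1 / 2 : ℂ) • 1],
    ?_, ?_, ?_, ?_, ?_⟩
  · have := abs_nonneg a
    have := abs_nonneg b
    have := abs_nonneg c
    intro i
    fin_cases i <;> simp <;> linarith
  · simp [Fin.sum_univ_succ]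
    ring
  · simp only [Fin.forall_fin_succ]
    refine ⟨?_, ?_, ?_, ?_, ?_, ?_, half_density, fun i => i.elim0⟩ <;>
      exact blo_density _ _ (by norm_num)
  · simp only [Fin.forall_fin_succ]
    refine ⟨?_, ?_, ?_, ?_, ?_, ?_, half_density, fun i => i.elim0⟩ <;>
      exact blo_density _ _ (by linarith)
  · have e0 := pair_eq 0 a s hs'
    have e1 := pair_eq 1 b t ht'
    have e2 := pair_eq 2 c u hu'
    have e3 : ((1 - (|a| + |b| + |c|) : ℝ) : ℂ) •
        (((1 / 2 : ℂ) • (1 : Matrix (Fin 2) (Fin 2) ℂ)) ⊗ₖ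
          ((1 / 2 : ℂ) • (1 : Matrix (Fin 2) (Fin 2) ℂ)))
        = (1 / 4 : ℂ) • ((1 - (((|a| : ℝ) : ℂ) + ((|b| : ℝ) : ℂ) + ((|c| : ℝ) : ℂ))) • 1) := by
      rw [Matrix.smul_kronecker, Matrix.kronecker_smul, Matrix.one_kronecker_one]
      simp only [smul_smul]
      congr 1
      push_cast
      ring
    have e4 : corr a b c = (1 / 4 : ℂ) • (((|a| : ℝ) : ℂ) • 1 + (a : ℂ) • (pauli 0 ⊗ₖ pauli 0))
        + (1 / 4 : ℂ) • (((|b| : ℝ) : ℂ) • 1 + (b : ℂ) • (pauli 1 ⊗ₖ pauli 1))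
        + (1 / 4 : ℂ) • (((|c| : ℝ) : ℂ) • 1 + (c : ℂ) • (pauli 2 ⊗ₖ pauli 2))
        + (1 / 4 : ℂ) • ((1 - (((|a| : ℝ) : ℂ) + ((|b| : ℝ) : ℂ) + ((|c| : ℝ) : ℂ))) • 1) := by
      unfold corr
      module
    rw [e4, ← e0, ← e1, ← e2, ← e3, Fin.sum_univ_seven]
    simp only [← add_assoc]
    rfl

lemma bell_eq (w : Fin 4 → ℝ) (hw : ∑ i, w i = 1) :
    ∑ i, (w i : ℂ) • outer (bell i) =
      corr (w 0 - w 1 + w 2 - w 3) (-w 0 + w 1 + w 2 - w 3) (w 0 + w 1 - w 2 - w 3) := by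
  have h2 : ((Real.sqrt 2 : ℝ) : ℂ)⁻¹ * ((Real.sqrt 2 : ℝ) : ℂ)⁻¹ = 1 / 2 := by
    rw [← mul_inv, ← Complex.ofReal_mul, Real.mul_self_sqrt (by norm_num)]
    norm_num
  have hw' : (w 0 : ℂ) + w 1 + w 2 + w 3 = 1 := by
    rw [Fin.sum_univ_four] at hw
    exact_mod_cast hw
  have hw3 : (w 3 : ℂ) = 1 - w 0 - w 1 - w 2 := by rw [← hw']; ring
  ext ⟨p, q⟩ ⟨p', q'⟩
  simp only [Fin.sum_univ_four, Matrix.add_apply, Matrix.smul_apply, corr, outer, Matrix.of_apply,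
    smul_eq_mul, Matrix.kronecker_apply, ← Matrix.one_kronecker_one (α := ℂ)]
  fin_cases p <;> fin_cases q <;> fin_cases p' <;> fin_cases q' <;>
    simp [bell, t2, e, pauli, h2, hw3] <;> ring

lemma cEl_corr (a b c : ℝ) : cEl (corr a b c) 0 0 = a ∧ cEl (corr a b c) 1 1 = b ∧
    cEl (corr a b c) 2 2 = c := by
  refine ⟨?_, ?_, ?_⟩ <;>
    simp [cEl, corr, add_mul, ← Matrix.mul_kronecker_mul, Matrix.trace_kronecker, Matrix.trace_add,
      Matrix.trace_smul] <;>
    simp [pauli, Matrix.trace, Fin.sum_univ_two] <;> ring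

/-- Every separable two-qubit state satisfies `|c₁₁| + |c₂₂| + |c₃₃| ≤ 1` (its
correlation diagonal lies in the octahedron `T ∩ −T`); for Bell-diagonal states this
condition is also sufficient for separability. -/
theorem stmt19 (ρ : Matrix (Fin 2 × Fin 2) (Fin 2 × Fin 2) ℂ) (hρ : IsDensity ρ) :
    (Separable ρ → |cEl ρ 0 0| + |cEl ρ 1 1| + |cEl ρ 2 2| ≤ 1) ∧
    ((∃ w : Fin 4 → ℝ, (∀ i, 0 ≤ w i) ∧ (∑ i, w i = 1) ∧
        ρ = ∑ i, (w i : ℂ) • outer (bell i)) →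
      (Separable ρ ↔ |cEl ρ 0 0| + |cEl ρ 1 1| + |cEl ρ 2 2| ≤ 1)) := by
  refine ⟨sep_le ρ, ?_⟩
  rintro ⟨w, -, hw, h⟩
  refine ⟨sep_le ρ, fun hc => ?_⟩
  rw [bell_eq w hw] at h
  subst h
  obtain ⟨h0, h1, h2⟩ := cEl_corr (w 0 - w 1 + w 2 - w 3) (-w 0 + w 1 + w 2 - w 3)
    (w 0 + w 1 - w 2 - w 3)
  rw [h0, h1, h2] at hc
  exact corr_sep _ _ _ hc
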